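/- If A and B are two-dimensional spacelike linear subspaces of Minkowski spacetime R^{1+3}, then there exists a two-dimensional spacelike linear subspace C such that B is the image of A under the orthogonal reflection by C (i.e., the linear map that is the identity on C and minus the identity on the Lorentz-orthogonal complement of C). -/

import Mathlib

noncomputable section

/-- Minkowski spacetime ℝ^{1+3}. -/
abbrev V4 : Type := Fin 4 → ℝ

/-- The Minkowski metric of signature (+,-,-,-). -/
def mg (x y : V4) : ℝ := x 0 * y 0 - x 1 * y 1 - x 2 * y 2 - x 3 * y 3

/-- A two-dimensional spacelike linear subspace. -/
def IsSpacelikePlane (S : Submodule ℝ V4) : Prop :=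
  Module.finrank ℝ S = 2 ∧ ∀ x ∈ S, x ≠ 0 → mg x x < 0

/-- `j` is the orthogonal reflection by the spacelike plane `S`: it fixes `S`
pointwise and acts as `-1` on the Lorentz-orthogonal complement of `S`. -/
def IsReflectionBy (S : Submodule ℝ V4) (j : V4 →ₗ[ℝ] V4) : Prop :=
  (∀ x ∈ S, j x = x) ∧ ∀ x, (∀ s ∈ S, mg x s = 0) → j x = -x

theorem mg_add_l (x y z : V4) : mg (x + y) z = mg x z + mg y z := by simp [mg]; ring
theorem mg_add_r (x y z : V4) : mg z (x + y) = mg z x + mg z y := by simp [mg]; ring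
theorem mg_smul_l (c : ℝ) (x z : V4) : mg (c • x) z = c * mg x z := by simp [mg]; ring
theorem mg_smul_r (c : ℝ) (x z : V4) : mg z (c • x) = c * mg z x := by simp [mg]; ring
theorem mg_symm (x y : V4) : mg x y = mg y x := by simp [mg]; ring

theorem finrank_pair {x y : V4} (h : LinearIndependent ℝ ![x, y]) :
    Module.finrank ℝ (Submodule.span ℝ {x, y}) = 2 := by
  have := finrank_span_eq_card h
  rw [Matrix.range_cons_cons_empty] at this
  simpa using this

/-- Every spacelike plane has an orthonormal basis (for `-mg`). -/
theorem exists_onb (S : Submodule ℝ V4) (hS : IsSpacelikePlane S) :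
    ∃ a b : V4, S = Submodule.span ℝ {a, b} ∧ mg a a = -1 ∧ mg b b = -1 ∧ mg a b = 0 := by
  obtain ⟨hd, hn⟩ := hS
  have key : ∀ x ∈ S, x ≠ 0 → ∃ c : ℝ, c ≠ 0 ∧ mg (c • x) (c • x) = -1 := by
    intro x hx h0
    have h := hn x hx h0
    have hs : 0 < √(-mg x x) := Real.sqrt_pos.2 (by linarith)
    have h2 : √(-mg x x) * √(-mg x x) = -mg x x := Real.mul_self_sqrt (by linarith)
    refine ⟨(√(-mg x x))⁻¹, (inv_pos.2 hs).ne', ?_⟩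
    rw [mg_smul_l, mg_smul_r]
    have h3 : mg x x = -(√(-mg x x) * √(-mg x x)) := by linarith
    generalize √(-mg x x) = t at *
    rw [h3]
    field_simp
  have : Module.Finite ℝ S := inferInstance
  let e : Module.Basis (Fin 2) ℝ S := Module.finBasisOfFinrankEq ℝ S hd
  have hli : LinearIndependent ℝ ![((e 0 : S) : V4), ((e 1 : S) : V4)] := by
    have := e.linearIndependent.map' S.subtype (Submodule.ker_subtype S)
    have heq : ![((e 0 : S) : V4), ((e 1 : S) : V4)] = S.subtype ∘ e := by
      funext i
      fin_cases i <;> rfl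
    rw [heq]
    exact this
  rw [LinearIndependent.pair_iff] at hli
  have h0 : ((e 0 : S) : V4) ≠ 0 := by
    intro h
    have := hli 1 0 (by simp [h])
    simp at this
  obtain ⟨c, hc, hc1⟩ := key _ (e 0).2 h0
  set a : V4 := c • ((e 0 : S) : V4) with ha
  have haS : a ∈ S := S.smul_mem _ (e 0).2
  set w : V4 := ((e 1 : S) : V4) + mg ((e 1 : S) : V4) a • a with hw
  have hwS : w ∈ S := S.add_mem (e 1).2 (S.smul_mem _ haS)
  have hw0 : w ≠ 0 := by
    intro h
    have := hli (mg ((e 1 : S) : V4) a * c) 1 (by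
      rw [← h, hw, ha, smul_smul]; module)
    simp at this
  obtain ⟨d, hd0, hd1⟩ := key _ hwS hw0
  have haw : mg a w = 0 := by
    rw [hw, mg_add_r, mg_smul_r, hc1, mg_symm a]; ring
  have hab : mg a (d • w) = 0 := by rw [mg_smul_r, haw, mul_zero]
  refine ⟨a, d • w, ?_, hc1, hd1, hab⟩
  symm
  apply Submodule.eq_of_le_of_finrank_eq
  · rw [Submodule.span_le]
    rintro x (rfl | rfl)
    · exact haS
    · exact S.smul_mem _ hwS
  · rw [hd]
    have hl2 : LinearIndependent ℝ ![a, d • w] := by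
      rw [LinearIndependent.pair_iff]
      intro s t hst
      have e1 : mg a (s • a + t • d • w) = 0 := by rw [hst]; simp [mg]
      have e2 : mg (d • w) (s • a + t • d • w) = 0 := by rw [hst]; simp [mg]
      rw [mg_add_r, mg_smul_r s, mg_smul_r t] at e1 e2
      rw [hc1, hab] at e1
      rw [hd1, mg_symm _ a, hab] at e2
      constructor <;> linarith
    exact finrank_pair hl2

theorem exists_refl (C : Submodule ℝ V4) (hC : IsSpacelikePlane C) :
    ∃ j : V4 →ₗ[ℝ] V4, IsReflectionBy C j := by
  obtain ⟨a, b, hs, ha, hb, hab⟩ := exists_onb C hC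
  refine ⟨{ toFun := fun x => -x - (2 * mg x a) • a - (2 * mg x b) • b
            map_add' := ?_, map_smul' := ?_ }, ?_, ?_⟩
  · intro x y
    simp only [mg_add_l]; module
  · intro c x
    simp only [mg_smul_l, RingHom.id_apply]; module
  · intro x hx
    rw [hs, Submodule.mem_span_pair] at hx
    obtain ⟨s, t, rfl⟩ := hx
    simp only [LinearMap.coe_mk, AddHom.coe_mk, mg_add_l, mg_smul_l, ha, hb, hab, mg_symm b a]
    module
  · intro x hx
    have h1 := hx a (by rw [hs]; exact Submodule.subset_span (by simp))
    have h2 := hx b (by rw [hs]; exact Submodule.subset_span (by simp))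
    simp [h1, h2]

/-- The main step, for bases related by a positive semidefinite symmetric matrix. -/
theorem main_step (a b u v : V4) (ha : mg a a = -1) (hb : mg b b = -1) (hab : mg a b = 0)
    (hu : mg u u = -1) (hv : mg v v = -1) (huv : mg u v = 0)
    (hsym : mg a v = mg b u) (htr : mg a u + mg b v ≤ 0)
    (hdet : 0 ≤ mg a u * mg b v - mg a v * mg b u) :
    ∃ (C : Submodule ℝ V4) (j : V4 →ₗ[ℝ] V4), IsSpacelikePlane C ∧ IsReflectionBy C j ∧
      (Submodule.span ℝ {a, b}).map j = Submodule.span ℝ {u, v} := by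
  have hp : mg a u ≤ 0 := by
    by_contra h
    rw [hsym] at hdet
    nlinarith [sq_nonneg (mg b u)]
  have hq : mg b v ≤ 0 := by
    by_contra h
    rw [hsym] at hdet
    nlinarith [sq_nonneg (mg b u)]
  have hQ : ∀ s t : ℝ, mg (s • (a + u) + t • (b + v)) (s • (a + u) + t • (b + v))
      ≤ -2 * (s ^ 2 + t ^ 2) := by
    intro s t
    have : mg (s • (a + u) + t • (b + v)) (s • (a + u) + t • (b + v)) =
        -2 * (s ^ 2 + t ^ 2) + 2 * (mg a u * s ^ 2 + 2 * mg b u * s * t + mg b v * t ^ 2) := by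
      simp only [mg_add_l, mg_add_r, mg_smul_l, mg_smul_r, mg_symm u a, mg_symm v a, mg_symm b a,
        mg_symm v b, mg_symm u b, mg_symm v u, ha, hb, hab, hu, hv, huv, hsym]
      ring
    rw [this]
    rw [hsym] at hdet
    suffices mg a u * s ^ 2 + 2 * mg b u * s * t + mg b v * t ^ 2 ≤ 0 by linarith
    generalize mg a u = p at *
    generalize mg b v = q at *
    generalize mg b u = r at *
    rcases hp.lt_or_eq with h | h
    · by_contra hc
      push Not at hc
      nlinarith [sq_nonneg (p * s + r * t), mul_pos_of_neg_of_neg h (neg_lt_zero.2 hc),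
        mul_nonneg hdet (sq_nonneg t)]
    · subst h
      have : r = 0 := by nlinarith
      subst this
      nlinarith [sq_nonneg t]
  have hC : IsSpacelikePlane (Submodule.span ℝ {a + u, b + v}) := by
    constructor
    · have hl : LinearIndependent ℝ ![a + u, b + v] := by
        rw [LinearIndependent.pair_iff]
        intro s t hst
        have := hQ s t
        rw [hst] at this
        have h0 : mg (0 : V4) 0 = 0 := by simp [mg]
        rw [h0] at this
        constructor <;> nlinarith [sq_nonneg s, sq_nonneg t]
      exact finrank_pair hl
    · intro x hx h0
      rw [Submodule.mem_span_pair] at hx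
      obtain ⟨s, t, rfl⟩ := hx
      refine (hQ s t).trans_lt ?_
      by_contra h
      have hs : s = 0 := by nlinarith [sq_nonneg s, sq_nonneg t]
      have ht : t = 0 := by nlinarith [sq_nonneg s, sq_nonneg t]
      simp [hs, ht] at h0
  obtain ⟨j, hj⟩ := exists_refl _ hC
  refine ⟨_, j, hC, hj, ?_⟩
  have aux : ∀ x y : V4, j (x + y) = x + y → j (x + (-1 : ℝ) • y) = -(x + (-1 : ℝ) • y) →
      j x = y := by
    intro x y h1 h2
    have : x = (1 / 2 : ℝ) • (x + y) + (1 / 2 : ℝ) • (x + (-1 : ℝ) • y) := by module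
    rw [this, map_add, map_smul, map_smul, h1, h2]
    module
  have hja : j a = u := by
    apply aux
    · exact hj.1 _ (Submodule.subset_span (by simp))
    · apply hj.2
      intro x hx
      rw [Submodule.mem_span_pair] at hx
      obtain ⟨s, t, rfl⟩ := hx
      simp only [mg_add_l, mg_add_r, mg_smul_l, mg_smul_r, mg_symm u a, mg_symm v a, mg_symm b a,
        mg_symm v b, mg_symm u b, mg_symm v u, ha, hb, hab, hu, hv, huv, hsym]
      ring
  have hjb : j b = v := by
    apply aux
    · exact hj.1 _ (Submodule.subset_span (by simp))
    · apply hj.2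
      intro x hx
      rw [Submodule.mem_span_pair] at hx
      obtain ⟨s, t, rfl⟩ := hx
      simp only [mg_add_l, mg_add_r, mg_smul_l, mg_smul_r, mg_symm u a, mg_symm v a, mg_symm b a,
        mg_symm v b, mg_symm u b, mg_symm v u, ha, hb, hab, hu, hv, huv, hsym]
      ring
  rw [Submodule.map_span, Set.image_pair, hja, hjb]

/-- Rotating the second basis makes the matrix symmetric and positive semidefinite. -/
theorem main_step2 (a b u v : V4) (ha : mg a a = -1) (hb : mg b b = -1) (hab : mg a b = 0)
    (hu : mg u u = -1) (hv : mg v v = -1) (huv : mg u v = 0)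
    (hdet : 0 ≤ mg a u * mg b v - mg a v * mg b u) :
    ∃ (C : Submodule ℝ V4) (j : V4 →ₗ[ℝ] V4), IsSpacelikePlane C ∧ IsReflectionBy C j ∧
      (Submodule.span ℝ {a, b}).map j = Submodule.span ℝ {u, v} := by
  have hcd : ∃ c d : ℝ, c ^ 2 + d ^ 2 = 1 ∧ c * (mg a v - mg b u) = d * (mg a u + mg b v) ∧
      c * (mg a u + mg b v) + d * (mg a v - mg b u) ≤ 0 := by
    generalize mg a v - mg b u = y
    generalize mg a u + mg b v = x
    by_cases h : x ^ 2 + y ^ 2 = 0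
    · have hx : x = 0 := by nlinarith [sq_nonneg x, sq_nonneg y]
      have hy : y = 0 := by nlinarith [sq_nonneg x, sq_nonneg y]
      exact ⟨1, 0, by norm_num, by simp [hy], by simp [hx]⟩
    · have hpos : 0 < x ^ 2 + y ^ 2 := lt_of_le_of_ne (by positivity) (Ne.symm h)
      have hr : 0 < √(x ^ 2 + y ^ 2) := Real.sqrt_pos.2 hpos
      have hr2 : √(x ^ 2 + y ^ 2) ^ 2 = x ^ 2 + y ^ 2 := Real.sq_sqrt hpos.le
      generalize √(x ^ 2 + y ^ 2) = r at *
      refine ⟨-x / r, -y / r, ?_, ?_, ?_⟩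
      · field_simp; linarith
      · field_simp
      · have : -x / r * x + -y / r * y = -((x ^ 2 + y ^ 2) / r) := by field_simp; ring
        rw [this]
        have := div_pos hpos hr
        linarith
  obtain ⟨c, d, h1, h2, h3⟩ := hcd
  have hspan : Submodule.span ℝ {u, v} =
      Submodule.span ℝ {c • u + d • v, (-d) • u + c • v} := by
    apply le_antisymm
    · rw [Submodule.span_le]
      rintro x (rfl | rfl)
      · refine Submodule.mem_span_pair.2 ⟨c, -d, ?_⟩
        calc _ = (c ^ 2 + d ^ 2) • x := by module
          _ = x := by rw [h1, one_smul]
      · refine Submodule.mem_span_pair.2 ⟨d, c, ?_⟩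
        calc _ = (c ^ 2 + d ^ 2) • x := by module
          _ = x := by rw [h1, one_smul]
    · rw [Submodule.span_le]
      rintro x (rfl | rfl)
      · exact Submodule.mem_span_pair.2 ⟨_, _, rfl⟩
      · exact Submodule.mem_span_pair.2 ⟨_, _, rfl⟩
  rw [hspan]
  apply main_step a b _ _ ha hb hab <;>
    simp only [mg_add_l, mg_add_r, mg_smul_l, mg_smul_r, mg_symm v u, hu, hv, huv]
  · linarith
  · linarith
  · ring
  · linarith
  · linarith
  · have : (c * mg a u + d * mg a v) * (-d * mg b u + c * mg b v) -
        (-d * mg a u + c * mg a v) * (c * mg b u + d * mg b v) =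
        (c ^ 2 + d ^ 2) * (mg a u * mg b v - mg a v * mg b u) := by ring
    rw [this, h1, one_mul]
    exact hdet

theorem reflecting_planes (A B : Submodule ℝ V4)
    (hA : IsSpacelikePlane A) (hB : IsSpacelikePlane B) :
    ∃ (C : Submodule ℝ V4) (j : V4 →ₗ[ℝ] V4),
      IsSpacelikePlane C ∧ IsReflectionBy C j ∧ A.map j = B := by
  obtain ⟨a, b, rfl, ha, hb, hab⟩ := exists_onb A hA
  obtain ⟨u, v, rfl, hu, hv, huv⟩ := exists_onb B hB
  rcases le_total 0 (mg a u * mg b v - mg a v * mg b u) with h | h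
  · exact main_step2 a b u v ha hb hab hu hv huv h
  · rw [Set.pair_comm u v]
    exact main_step2 a b v u ha hb hab hv hu (by rw [mg_symm, huv]) (by linarith)
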